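/- For every function f : ℕ → ℝ_{≥0} and every integer n > 1, there exists a strategic game with n players whose selfishness level equals f(n). (One such game: each player i ∈ {1,...,n} has strategies {0,1}; the payoff of player i at joint strategy s is 0 if s is the all-ones strategy profile, f(n) if s_i = 0 and s_j = 1 for all j < i, and −(f(n)+1)/(n−1) otherwise.) -/

import Mathlib

/-!
At a social optimum `s`, a deviation to another social optimum leaves the social welfare unchanged,
so no `α` can deter it if it is profitable; any other deviation is unprofitable in `G(α)` exactly
when its appeal factor is at most `α`. In the game below the all-ones profile is the only social
optimum, with welfare `0`, every other profile has welfare `-1`, and a player who leaves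
the optimum alone gains `c`. Hence all appeal factors at the optimum equal `c`, and so does the
selfishness level.
-/

open Finset
open scoped ENNReal

/-- A strategic game with `n` players: each player `i` has a nonempty strategy
set `S i` and a real-valued payoff function `p i` on joint strategies. -/
structure Game (n : ℕ) where
  S : Fin n → Type
  ne : ∀ i, Nonempty (S i)
  p : Fin n → ((j : Fin n) → S j) → ℝ

namespace Game

variable {n : ℕ}

/-- The social welfare of a joint strategy. -/
def SW (G : Game n) (s : (j : Fin n) → G.S j) : ℝ := ∑ i, G.p i s

/-- A joint strategy is a social optimum if it maximizes the social welfare. -/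
def SocialOptimum (G : Game n) (s : (j : Fin n) → G.S j) : Prop :=
  ∀ t, G.SW t ≤ G.SW s

/-- A joint strategy is a (pure) Nash equilibrium if no unilateral deviation is profitable. -/
def NashEq (G : Game n) (s : (j : Fin n) → G.S j) : Prop :=
  ∀ (i : Fin n) (s' : G.S i), G.p i (Function.update s i s') ≤ G.p i s

/-- The altruistic version `G(α)` of a game `G`. -/
def alt (G : Game n) (α : ℝ) : Game n where
  S := G.S
  ne := G.ne
  p := fun i s => G.p i s + α * G.SW s

/-- `G` is `α`-selfish if some pure Nash equilibrium of `G(α)` is a social optimum of `G`. -/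
def Selfish (G : Game n) (α : ℝ) : Prop :=
  ∃ s, (G.alt α).NashEq s ∧ G.SocialOptimum s

/-- The selfishness level of `G`: the infimum of the nonnegative `α` for which `G`
is `α`-selfish (`⊤` if there is no such `α`). -/
noncomputable def selfishnessLevel (G : Game n) : ℝ≥0∞ :=
  sInf {x : ℝ≥0∞ | ∃ α : ℝ, 0 ≤ α ∧ G.Selfish α ∧ x = ENNReal.ofReal α}

/-- A social optimum is stable if no player profits from a unilateral deviation
to another social optimum. -/
def StableOptimum (G : Game n) (s : (j : Fin n) → G.S j) : Prop :=
  G.SocialOptimum s ∧ ∀ (i : Fin n) (s' : G.S i),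
    G.SocialOptimum (Function.update s i s') →
      G.p i (Function.update s i s') ≤ G.p i s

/-- The appeal factor of a unilateral deviation `s'` of player `i` from `s`. -/
noncomputable def AF (G : Game n) (s : (j : Fin n) → G.S j) (i : Fin n) (s' : G.S i) : ℝ :=
  (G.p i (Function.update s i s') - G.p i s) /
    (G.SW s - G.SW (Function.update s i s'))

end Game

namespace Game

section AppealFactor

variable {n : ℕ} {G : Game n} {s t : (j : Fin n) → G.S j} {α : ℝ}

theorem SocialOptimum.socialOptimum_iff_SW_eq (hs : G.SocialOptimum s) :
    G.SocialOptimum t ↔ G.SW t = G.SW s :=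
  ⟨fun ht => (hs t).antisymm (ht s), fun h u => (hs u).trans h.ge⟩

theorem nashEq_alt_iff_sub_le :
    (G.alt α).NashEq s ↔ ∀ (i : Fin n) (s' : G.S i),
      G.p i (Function.update s i s') - G.p i s ≤
        α * (G.SW s - G.SW (Function.update s i s')) := by
  refine forall₂_congr fun i s' => ?_
  change G.p i (Function.update s i s') + α * G.SW (Function.update s i s') ≤
    G.p i s + α * G.SW s ↔ _
  rw [mul_sub, sub_le_sub_iff, add_comm (α * _)]

theorem SocialOptimum.nashEq_alt_iff (hs : G.SocialOptimum s) :
    (G.alt α).NashEq s ↔ G.StableOptimum s ∧ ∀ (i : Fin n) (s' : G.S i),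
      ¬ G.SocialOptimum (Function.update s i s') → G.AF s i s' ≤ α := by
  have deviation_iff (i : Fin n) (s' : G.S i) :
      G.p i (Function.update s i s') - G.p i s ≤
          α * (G.SW s - G.SW (Function.update s i s')) ↔
        (G.SocialOptimum (Function.update s i s') →
          G.p i (Function.update s i s') ≤ G.p i s) ∧
        (¬ G.SocialOptimum (Function.update s i s') → G.AF s i s' ≤ α) := by
    by_cases hu : G.SocialOptimum (Function.update s i s')
    · simp [hu, hs.socialOptimum_iff_SW_eq.mp hu]
    · have welfare_loss : 0 < G.SW s - G.SW (Function.update s i s') :=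
        sub_pos.mpr ((hs _).lt_of_ne (mt hs.socialOptimum_iff_SW_eq.mpr hu))
      simp [hu, AF, div_le_iff₀ welfare_loss]
  simp only [nashEq_alt_iff_sub_le, deviation_iff, forall_and, StableOptimum, hs, true_and]

theorem selfish_iff_AF_le_of_socialOptimum_iff_eq (hs : ∀ t, G.SocialOptimum t ↔ t = s) :
    G.Selfish α ↔ ∀ (i : Fin n), ∀ s' ≠ s i, G.AF s i s' ≤ α := by
  have hopt : G.SocialOptimum s := (hs s).mpr rfl
  have stable : G.StableOptimum s :=
    ⟨hopt, fun i _ hu => (congrArg (G.p i) ((hs _).mp hu)).le⟩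
  have selfish_iff_nashEq : G.Selfish α ↔ (G.alt α).NashEq s :=
    ⟨fun ⟨t, hnash, ht⟩ => (hs t).mp ht ▸ hnash, fun hnash => ⟨s, hnash, hopt⟩⟩
  simp only [selfish_iff_nashEq, hopt.nashEq_alt_iff, stable, true_and, hs,
    Function.update_eq_self_iff, ne_eq]

theorem selfishnessLevel_eq_ofReal_of_isLeast {c : ℝ}
    (hc : IsLeast {α : ℝ | 0 ≤ α ∧ G.Selfish α} c) :
    G.selfishnessLevel = ENNReal.ofReal c := by
  refine le_antisymm (sInf_le ⟨c, hc.1.1, hc.1.2, rfl⟩) (le_sInf ?_)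
  rintro _ ⟨α, hα, hselfish, rfl⟩
  exact ENNReal.ofReal_le_ofReal (hc.2 ⟨hα, hselfish⟩)

end AppealFactor

open Classical in
/-- The game in which all payoffs are `0` if nobody defects; otherwise the first defector wins `c`
at the expense of the other players, who share the cost `c + 1` equally. Strategy `0` (defection)
is encoded as `false` and `1` as `true`; the cost per player is meaningful only for `1 < n`. -/
noncomputable def firstDefectorGame (n : ℕ) (c : ℝ) : Game n where
  S _ := Bool
  ne _ := inferInstance
  p i s :=
    if s = fun _ => true then 0
    else if IsLeast {j | s j = false} i then c
    else -(c + 1) / (n - 1)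

namespace firstDefectorGame

variable {n : ℕ} {c : ℝ}

theorem SW_all_true : (firstDefectorGame n c).SW (fun _ => true) = 0 :=
  Finset.sum_eq_zero fun _ _ => if_pos rfl

theorem SW_of_ne_all_true (hn : 1 < n) {s : Fin n → Bool} (hs : s ≠ fun _ => true) :
    (firstDefectorGame n c).SW s = -1 := by
  have exists_defector : ∃ i, s i = false := by simpa [funext_iff] using hs
  obtain ⟨k, hmin⟩ := (Set.toFinite {i | s i = false}).exists_minimal exists_defector
  have first_defector : IsLeast {i | s i = false} k := minimal_iff_isLeast.mp hmin
  have first_defector_iff (i : Fin n) : IsLeast {j | s j = false} i ↔ i = k :=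
    ⟨fun hi => hi.unique first_defector, fun hi => hi ▸ first_defector⟩
  have others_pos : (0 : ℝ) < n - 1 := sub_pos.mpr (by exact_mod_cast hn)
  calc (firstDefectorGame n c).SW s
      = ∑ i, if i = k then c else -(c + 1) / (n - 1 : ℝ) := by
        simp only [SW, firstDefectorGame, hs, first_defector_iff, if_false]
    _ = c + (n - 1) * (-(c + 1) / (n - 1)) := by
        rw [← Finset.add_sum_erase _ _ (Finset.mem_univ k), if_pos rfl,
          Finset.sum_congr rfl fun i hi => if_neg (Finset.ne_of_mem_erase hi)]
        simp [Finset.card_erase_of_mem, Nat.cast_pred (zero_lt_one.trans hn)]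
    _ = -1 := by
        field_simp
        ring

theorem socialOptimum_iff (hn : 1 < n) (s : Fin n → Bool) :
    (firstDefectorGame n c).SocialOptimum s ↔ s = fun _ => true := by
  have all_true_optimal : (firstDefectorGame n c).SocialOptimum fun _ => true := fun t => by
    rw [SW_all_true]
    rcases eq_or_ne t fun _ => true with rfl | ht
    · exact SW_all_true.le
    · rw [SW_of_ne_all_true hn ht]
      exact neg_one_lt_zero.le
  refine ⟨fun hopt => by_contra fun hs => ?_, fun hs => hs ▸ all_true_optimal⟩
  have zero_le_neg_one : (0 : ℝ) ≤ -1 := by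
    simpa only [SW_all_true, SW_of_ne_all_true hn hs] using hopt fun _ => true
  exact neg_one_lt_zero.not_ge zero_le_neg_one

theorem AF_all_true (hn : 1 < n) (i : Fin n) :
    (firstDefectorGame n c).AF (fun _ => true) i false = c := by
  let deviation : Fin n → Bool := Function.update (fun _ => true) i false
  have deviation_ne : deviation ≠ fun _ => true := by simp [deviation]
  have first_defector : IsLeast {j | deviation j = false} i := by
    simp [deviation, Function.update_apply]
  have payoff_deviation : (firstDefectorGame n c).p i deviation = c :=
    (if_neg deviation_ne).trans (if_pos first_defector)
  have payoff_all_true : (firstDefectorGame n c).p i (fun _ => true) = 0 := if_pos rfl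
  change ((firstDefectorGame n c).p i deviation - (firstDefectorGame n c).p i fun _ => true) /
    ((firstDefectorGame n c).SW (fun _ => true) - (firstDefectorGame n c).SW deviation) = c
  rw [payoff_deviation, payoff_all_true, SW_all_true, SW_of_ne_all_true hn deviation_ne]
  simp

theorem selfish_iff_le (hn : 1 < n) {α : ℝ} : (firstDefectorGame n c).Selfish α ↔ c ≤ α := by
  rw [selfish_iff_AF_le_of_socialOptimum_iff_eq (socialOptimum_iff hn)]
  refine ⟨fun h => ?_, fun h i s' hs' => ?_⟩
  · let i : Fin n := ⟨0, zero_lt_one.trans hn⟩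
    exact (AF_all_true hn i).ge.trans (h i false Bool.false_ne_true)
  · obtain rfl : s' = false := Bool.of_not_eq_true hs'
    exact (AF_all_true hn i).trans_le h

theorem selfishnessLevel_eq (hn : 1 < n) (hc : 0 ≤ c) :
    (firstDefectorGame n c).selfishnessLevel = ENNReal.ofReal c :=
  selfishnessLevel_eq_ofReal_of_isLeast
    ⟨⟨hc, (selfish_iff_le hn).mpr le_rfl⟩, fun _ hα => (selfish_iff_le hn).mp hα.2⟩

end firstDefectorGame

end Game

/-- for every `f : ℕ → ℝ≥0` and every `n > 1` there is a strategic game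
with `n` players whose selfishness level equals `f(n)`. -/
theorem exists_game_selfishnessLevel_eq (f : ℕ → ℝ) (hf : ∀ m, 0 ≤ f m)
    (n : ℕ) (hn : 1 < n) :
    ∃ G : Game n, G.selfishnessLevel = ENNReal.ofReal (f n) :=
  ⟨Game.firstDefectorGame n (f n), Game.firstDefectorGame.selfishnessLevel_eq hn (hf n)⟩
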